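/- arXiv:2211.17116 — 3 statements merged into one kernel-verified Lean document; each statement's English description precedes it below -/
import Mathlib

section
/- Suppose there exists a joint policy ζ_b such that the induced transition matrix P_{ζ_b} on S is irreducible and aperiodic, and fix δ > 0. Then every ζ ∈ Π_δ admits a unique stationary distribution μ^ζ, and μ_min := inf_{ζ ∈ Π_δ} min_{s ∈ S} μ^ζ(s) > 0. -/
open scoped BigOperators

noncomputable section

namespace LPI

/-- A probability distribution on a finite type, represented as a nonnegative
function summing to one. -/
def IsDist {X : Type} [Fintype X] (d : X → ℝ) : Prop :=
  (∀ x, 0 ≤ d x) ∧ ∑ x, d x = 1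

/-- Total variation distance between two finitely supported distributions. -/
def tv {X : Type} [Fintype X] (d d' : X → ℝ) : ℝ :=
  (1 / 2) * ∑ x, |d x - d' x|

/-- A `σ`-regular distribution: positive entries with log-ratios bounded by `σ`. -/
def IsRegularDist {X : Type} (σ : ℝ) (d : X → ℝ) : Prop :=
  (∀ x, 0 < d x) ∧ ∀ x y, Real.log (d x / d y) ≤ σ

/-- A `(ν,μ)`-decay matrix with respect to a distance function. -/
def IsDecayMat {n : ℕ} (dist : Fin n → Fin n → ℕ) (ν μ : ℝ)
    (M : Fin n → Fin n → ℝ) : Prop :=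
  (∀ i j, 0 ≤ M i j) ∧
  (∀ i, ∑ j, M i j * ((dist i j : ℝ) + 1) ^ μ ≤ ν) ∧
  (∀ j, ∑ i, M i j * ((dist i j : ℝ) + 1) ^ μ ≤ ν)

variable {n : ℕ} {S A : Fin n → Type}
variable [∀ i, Fintype (S i)] [∀ i, Fintype (A i)]
variable [∀ i, DecidableEq (S i)] [∀ i, DecidableEq (A i)]
variable [∀ i, Nonempty (S i)] [∀ i, Nonempty (A i)]

/-- Probability that the joint policy `ζ` selects the joint action `a` in state `s`. -/
def jprob (ζ : ∀ i : Fin n, (∀ j, S j) → A i → ℝ)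
    (s : ∀ j, S j) (a : ∀ i, A i) : ℝ :=
  ∏ i, ζ i s (a i)

/-- Product of a tuple of local action distributions. -/
def prodd (π : ∀ i : Fin n, A i → ℝ) (a : ∀ i, A i) : ℝ :=
  ∏ i, π i (a i)

/-- A joint policy: each agent's local conditional distribution is a distribution. -/
def IsPolicy (ζ : ∀ i : Fin n, (∀ j, S j) → A i → ℝ) : Prop :=
  ∀ i s, IsDist (ζ i s)

/-- Local transition kernels are distributions. -/
def IsKernel (P : ∀ i : Fin n, (∀ j, S j) → A i → S i → ℝ) : Prop :=
  ∀ i s a, IsDist (P i s a)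

/-- The local kernel of agent `i` depends only on the states of the closed
neighborhood `N_i` of `i`. -/
def IsLocalKernel (G : SimpleGraph (Fin n))
    (P : ∀ i : Fin n, (∀ j, S j) → A i → S i → ℝ) : Prop :=
  ∀ i : Fin n, ∀ s s' : ∀ j, S j,
    (∀ j, (j = i ∨ G.Adj i j) → s j = s' j) → ∀ a, P i s a = P i s' a

/-- Factorized global transition probability `P(s'|s,a) = ∏ i P_i(s'_i|s,a_i)`. -/
def Pglob (P : ∀ i : Fin n, (∀ j, S j) → A i → S i → ℝ)
    (s : ∀ j, S j) (a : ∀ i, A i) (s' : ∀ j, S j) : ℝ :=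
  ∏ i, P i s (a i) (s' i)

/-- Global stage reward `r(s,a) = (1/n) ∑ i r_i(s_i,a_i)`. -/
def rglob (r : ∀ i : Fin n, S i → A i → ℝ) (s : ∀ j, S j) (a : ∀ i, A i) : ℝ :=
  (1 / (n : ℝ)) * ∑ i, r i (s i) (a i)

/-- Transition matrix on global states induced by joint policy `ζ`. -/
def Pmat (P : ∀ i : Fin n, (∀ j, S j) → A i → S i → ℝ)
    (ζ : ∀ i : Fin n, (∀ j, S j) → A i → ℝ) :
    Matrix (∀ j, S j) (∀ j, S j) ℝ :=
  Matrix.of fun s s' => ∑ a : ∀ i, A i, jprob ζ s a * Pglob P s a s'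

/-- Entropy-regularized one-step reward of policy `ζ`. -/
def gz (τ : ℝ) (r : ∀ i : Fin n, S i → A i → ℝ)
    (ζ : ∀ i : Fin n, (∀ j, S j) → A i → ℝ) (s : ∀ j, S j) : ℝ :=
  ∑ a : ∀ i, A i, jprob ζ s a * (rglob r s a - τ * Real.log (jprob ζ s a))

/-- Entropy-regularized value function `V^ζ = ∑_t γ^t (P^ζ)^t g^ζ`. -/
def Vz (γ τ : ℝ) (P : ∀ i : Fin n, (∀ j, S j) → A i → S i → ℝ)
    (r : ∀ i : Fin n, S i → A i → ℝ)
    (ζ : ∀ i : Fin n, (∀ j, S j) → A i → ℝ) : (∀ j, S j) → ℝ :=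
  fun s => ∑' t : ℕ, γ ^ t * ((Pmat P ζ ^ t).mulVec (gz τ r ζ)) s

/-- Objective `J(ζ) = ∑_s ρ(s) V^ζ(s)`. -/
def Jobj (γ τ : ℝ) (P : ∀ i : Fin n, (∀ j, S j) → A i → S i → ℝ)
    (r : ∀ i : Fin n, S i → A i → ℝ)
    (ζ : ∀ i : Fin n, (∀ j, S j) → A i → ℝ) (ρ : (∀ j, S j) → ℝ) : ℝ :=
  ∑ s, ρ s * Vz γ τ P r ζ s

/-- Entropy-regularized Bellman optimal operator. -/
def bellman (γ τ : ℝ) (P : ∀ i : Fin n, (∀ j, S j) → A i → S i → ℝ)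
    (r : ∀ i : Fin n, S i → A i → ℝ)
    (V : (∀ j, S j) → ℝ) : (∀ j, S j) → ℝ :=
  fun s => sSup { x : ℝ | ∃ π : ∀ i : Fin n, A i → ℝ, (∀ i, IsDist (π i)) ∧
    x = ∑ a : ∀ i, A i, prodd π a *
      (rglob r s a - τ * Real.log (prodd π a) +
        γ * ∑ s', Pglob P s a s' * V s') }

/-- Local entropy-regularized one-step reward of agent `i`. -/
def gzi (τ : ℝ) (r : ∀ i : Fin n, S i → A i → ℝ)
    (ζ : ∀ i : Fin n, (∀ j, S j) → A i → ℝ) (i : Fin n) (s : ∀ j, S j) : ℝ :=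
  ∑ a : ∀ k, A k, jprob ζ s a *
    (r i (s i) (a i) - (n : ℝ) * τ * Real.log (ζ i s (a i)))

/-- Local value function `V_i^ζ`. -/
def Vzi (γ τ : ℝ) (P : ∀ i : Fin n, (∀ j, S j) → A i → S i → ℝ)
    (r : ∀ i : Fin n, S i → A i → ℝ)
    (ζ : ∀ i : Fin n, (∀ j, S j) → A i → ℝ) (i : Fin n) : (∀ j, S j) → ℝ :=
  fun s => ∑' t : ℕ, γ ^ t * ((Pmat P ζ ^ t).mulVec (gzi τ r ζ i)) s

/-- Local Q-function `Q_i^ζ(s,a) = r_i(s_i,a_i) + γ ∑_{s'} P(s'|s,a) V_i^ζ(s')`. -/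
def Qzi (γ τ : ℝ) (P : ∀ i : Fin n, (∀ j, S j) → A i → S i → ℝ)
    (r : ∀ i : Fin n, S i → A i → ℝ)
    (ζ : ∀ i : Fin n, (∀ j, S j) → A i → ℝ) (i : Fin n)
    (s : ∀ j, S j) (a : ∀ k, A k) : ℝ :=
  r i (s i) (a i) + γ * ∑ s', Pglob P s a s' * Vzi γ τ P r ζ i s'

/-- Global Q-function `Q^ζ(s,a) = r(s,a) + γ ∑_{s'} P(s'|s,a) V^ζ(s')`. -/
def Qglob (γ τ : ℝ) (P : ∀ i : Fin n, (∀ j, S j) → A i → S i → ℝ)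
    (r : ∀ i : Fin n, S i → A i → ℝ)
    (ζ : ∀ i : Fin n, (∀ j, S j) → A i → ℝ)
    (s : ∀ j, S j) (a : ∀ k, A k) : ℝ :=
  rglob r s a + γ * ∑ s', Pglob P s a s' * Vz γ τ P r ζ s'

/-- Interaction matrix `Z^ζ` of a joint policy. -/
def Zpol (ζ : ∀ i : Fin n, (∀ j, S j) → A i → ℝ) (i j : Fin n) : ℝ :=
  ⨆ s : ∀ k, S k, ⨆ sj : S j, tv (ζ i s) (ζ i (Function.update s j sj))

/-- Interaction matrix `Z^Q` of a tuple of local Q-functions: varying the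
state-action pair of a single agent `j`. -/
def ZQ (Q : Fin n → (∀ j, S j) → (∀ j, A j) → ℝ) (i j : Fin n) : ℝ :=
  ⨆ s : ∀ k, S k, ⨆ a : ∀ k, A k, ⨆ sj : S j, ⨆ aj : A j,
    |Q i s a - Q i (Function.update s j sj) (Function.update a j aj)|

/-- Second-order interaction matrix `H^Q` of a global Q-function. -/
def HQ (Q : (∀ j, S j) → (∀ j, A j) → ℝ) (i j : Fin n) : ℝ :=
  ⨆ s : ∀ k, S k, ⨆ a : ∀ k, A k, ⨆ si : S i, ⨆ ai : A i, ⨆ sj : S j, ⨆ aj : A j,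
    |(Q s a - Q (Function.update s i si) (Function.update a i ai)) -
      (Q (Function.update s j sj) (Function.update a j aj) -
        Q (Function.update (Function.update s i si) j sj)
          (Function.update (Function.update a i ai) j aj))|

/-- The matrix `C` measuring interaction strength of the transition kernels. -/
def Cmat (G : SimpleGraph (Fin n)) [DecidableRel G.Adj]
    (P : ∀ i : Fin n, (∀ j, S j) → A i → S i → ℝ) (i j : Fin n) : ℝ :=
  if j = i then
    ⨆ s : ∀ k, S k, ⨆ si' : S i, ⨆ ai : A i, ⨆ ai' : A i,
      tv (P i s ai) (P i (Function.update s i si') ai')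
  else if G.Adj i j then
    ⨆ s : ∀ k, S k, ⨆ sj' : S j, ⨆ ai : A i,
      tv (P i s ai) (P i (Function.update s j sj') ai)
  else 0

/-- A `σ`-regular joint policy. -/
def IsRegularPolicy (σ : ℝ) (ζ : ∀ i : Fin n, (∀ j, S j) → A i → ℝ) : Prop :=
  ∀ i s, IsRegularDist σ (ζ i s)

/-- A `(ν,μ)`-decay joint policy. -/
def IsDecayPolicy (dist : Fin n → Fin n → ℕ) (ν μ : ℝ)
    (ζ : ∀ i : Fin n, (∀ j, S j) → A i → ℝ) : Prop :=
  IsDecayMat dist ν μ (Zpol ζ)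

/-- The policy class `Δ_{ν,μ,σ}`. -/
def InDelta (dist : Fin n → Fin n → ℕ) (ν μ σ : ℝ)
    (ζ : ∀ i : Fin n, (∀ j, S j) → A i → ℝ) : Prop :=
  IsPolicy ζ ∧ IsDecayPolicy dist ν μ ζ ∧ IsRegularPolicy σ ζ

/-- A `κ`-hop localized joint policy. -/
def IsKHop (G : SimpleGraph (Fin n)) (κ : ℕ)
    (ζ : ∀ i : Fin n, (∀ j, S j) → A i → ℝ) : Prop :=
  ∀ i : Fin n, ∀ s s' : ∀ j, S j,
    (∀ j, G.dist i j ≤ κ → s j = s' j) → ζ i s = ζ i s'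

/-- The largest local action space cardinality `A_max`. -/
def Amax (A : Fin n → Type) [∀ i, Fintype (A i)] : ℕ :=
  Finset.univ.sup fun i => Fintype.card (A i)

/-- An irreducible stochastic matrix on a finite set. -/
def MatIrreducible {X : Type} [Fintype X] [DecidableEq X] (M : Matrix X X ℝ) : Prop :=
  ∀ s s', ∃ t : ℕ, 1 ≤ t ∧ 0 < (M ^ t) s s'

/-- An aperiodic stochastic matrix: for each state `s`, the only common divisor
of the return times is `1` (i.e. `gcd {t ≥ 1 | (M^t)_{ss} > 0} = 1`). -/
def MatAperiodic {X : Type} [Fintype X] [DecidableEq X] (M : Matrix X X ℝ) : Prop :=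
  ∀ s, ∀ d : ℕ, (∀ t : ℕ, 1 ≤ t → 0 < (M ^ t) s s → d ∣ t) → d = 1

/-- A stationary distribution of a transition matrix. -/
def IsStationary {X : Type} [Fintype X] (M : Matrix X X ℝ) (μ : X → ℝ) : Prop :=
  IsDist μ ∧ Matrix.vecMul μ M = μ

/-!
A joint policy in `Π_δ` plays every joint action with probability at least `δ`, so
`δ • P_{ζ_b} ≤ P_ζ` entrywise: all these chains dominate one and the same irreducible nonnegative
matrix `B = δ • P_{ζ_b}`. Hence every `P_ζ` is irreducible. Moreover there is `η > 0` such that each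
entry of `B`, and so of `P_ζ`, is at least `η` after some number of steps, and averaging
`μ(x) (P_ζ ^ k)(x, y) ≤ μ(y)` over `x` bounds `μ(y)` below independently of `ζ`.

A stochastic matrix that fixes `v` from the left also fixes `|v|`. Normalizing `|v|` for a fixed
`v ≠ 0` gives existence, and applying this to a difference of stationary distributions gives
uniqueness.
-/

section Irreducible

open Quiver

theorem length_mapPath {V W : Type*} [Quiver V] [Quiver W] (F : V ⥤q W) {a b : V} (p : Path a b) :
    (F.mapPath p).length = p.length := by
  induction p with
  | nil => rfl
  | cons p e ih => rw [Prefunctor.mapPath_cons, Path.length_cons, Path.length_cons, ih]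

variable {ι R : Type*} [Ring R] [LinearOrder R] {A M : Matrix ι ι R}

theorem isIrreducible_of_forall_pos_imp_pos (hA : A.IsIrreducible) (hM : ∀ i j, 0 ≤ M i j)
    (hAM : ∀ i j, 0 < A i j → 0 < M i j) : M.IsIrreducible := by
  refine ⟨hM, fun i j => ?_⟩
  let inclusion : @Prefunctor ι A.toQuiver ι M.toQuiver :=
    @Prefunctor.mk ι A.toQuiver ι M.toQuiver id fun h => ⟨hAM _ _ h.down⟩
  obtain ⟨p, hp⟩ := hA.connected i j
  exact ⟨@Prefunctor.mapPath ι A.toQuiver ι M.toQuiver inclusion i j p,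
    hp.trans_eq (@length_mapPath ι ι A.toQuiver M.toQuiver inclusion i j p).symm⟩

theorem isIrreducible_of_le (hA : A.IsIrreducible) (hAM : ∀ i j, A i j ≤ M i j) :
    M.IsIrreducible :=
  isIrreducible_of_forall_pos_imp_pos hA (fun i j => (hA.nonneg i j).trans (hAM i j))
    fun i j hij => hij.trans_le (hAM i j)

theorem isIrreducible_smul [IsStrictOrderedRing R] {c : R} (hc : 0 < c) (hA : A.IsIrreducible) :
    (c • A).IsIrreducible :=
  isIrreducible_of_forall_pos_imp_pos hA (fun i j => mul_nonneg hc.le (hA.nonneg i j))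
    fun _ _ => mul_pos hc

end Irreducible

section InvariantVectors

open Matrix

variable {ι R : Type*} [Fintype ι]

theorem vecMul_pow_eq_self [DecidableEq ι] [Semiring R] {M : Matrix ι ι R} {v : ι → R}
    (hv : v ᵥ* M = v) (k : ℕ) : v ᵥ* M ^ k = v := by
  induction k with
  | zero => rw [pow_zero, vecMul_one]
  | succ k ih => rw [pow_succ, ← vecMul_vecMul, ih, hv]

section OrderedSemiring

variable [DecidableEq ι] [Semiring R] [PartialOrder R] [IsOrderedRing R] {A M : Matrix ι ι R}

theorem pow_apply_le_pow_apply (hA : ∀ i j, 0 ≤ A i j) (hAM : ∀ i j, A i j ≤ M i j) (k : ℕ)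
    (i j : ι) : (A ^ k) i j ≤ (M ^ k) i j := by
  induction k generalizing j with
  | zero => rw [pow_zero, pow_zero]
  | succ k ih =>
    rw [pow_succ, pow_succ, mul_apply, mul_apply]
    refine Finset.sum_le_sum fun l _ => mul_le_mul (ih l) (hAM l j) (hA l j) ?_
    exact (pow_apply_nonneg hA k i l).trans (ih l)

theorem mul_pow_apply_le_of_vecMul_eq_self {v : ι → R} (hM : ∀ i j, 0 ≤ M i j) (hv : 0 ≤ v)
    (hvM : v ᵥ* M = v) (k : ℕ) (i j : ι) : v i * (M ^ k) i j ≤ v j := calc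
  v i * (M ^ k) i j ≤ (v ᵥ* M ^ k) j :=
    Finset.single_le_sum (f := fun l => v l * (M ^ k) l j)
      (fun l _ => mul_nonneg (hv l) (pow_apply_nonneg hM k l j)) (Finset.mem_univ i)
  _ = v j := by rw [vecMul_pow_eq_self hvM]

theorem le_card_mul_of_forall_exists_le_pow_apply {μ : ι → R} {η : R} {j : ι}
    (hM : ∀ i j, 0 ≤ M i j) (hμ : μ ∈ stdSimplex R ι) (hμM : μ ᵥ* M = μ)
    (hη : ∀ i, ∃ k, η ≤ (M ^ k) i j) : η ≤ Fintype.card ι * μ j := by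
  have mass_le (i : ι) : μ i * η ≤ μ j := by
    obtain ⟨k, hk⟩ := hη i
    exact (mul_le_mul_of_nonneg_left hk (hμ.1 i)).trans
      (mul_pow_apply_le_of_vecMul_eq_self hM hμ.1 hμM k i j)
  calc η = ∑ i, μ i * η := by rw [← Finset.sum_mul, hμ.2, one_mul]
    _ ≤ ∑ _i : ι, μ j := Finset.sum_le_sum fun i _ => mass_le i
    _ = Fintype.card ι * μ j := by rw [Finset.sum_const, Finset.card_univ, nsmul_eq_mul]

end OrderedSemiring

section OrderedRing

variable [Ring R] [LinearOrder R] [IsStrictOrderedRing R] {A M : Matrix ι ι R}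

theorem exists_pos_forall_exists_le_pow_apply [DecidableEq ι] [Nonempty ι]
    (hA : A.IsIrreducible) : ∃ η > 0, ∀ i j, ∃ k, η ≤ (A ^ k) i j := by
  choose k _ hk using (isIrreducible_iff_exists_pow_pos hA.nonneg).1 hA
  obtain ⟨p, hp⟩ := Finite.exists_min fun p : ι × ι => (A ^ k p.1 p.2) p.1 p.2
  exact ⟨_, hk p.1 p.2, fun i j => ⟨k i j, hp (i, j)⟩⟩

theorem eq_zero_of_vecMul_eq_self_of_apply_eq_zero {v : ι → R} {j : ι} (hM : M.IsIrreducible)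
    (hv : 0 ≤ v) (hvM : v ᵥ* M = v) (hj : v j = 0) : v = 0 := by
  classical
  funext i
  obtain ⟨k, -, hk⟩ := (isIrreducible_iff_exists_pow_pos hM.nonneg).1 hM i j
  have hle : v i * (M ^ k) i j ≤ 0 :=
    hj ▸ mul_pow_apply_le_of_vecMul_eq_self hM.nonneg hv hvM k i j
  exact le_antisymm (nonpos_of_mul_nonpos_left hle hk) (hv i)

-- Entrywise `|v| ≤ |v| ᵥ* M` by the triangle inequality, and both sides have the same total mass.
theorem abs_vecMul_eq_abs_of_vecMul_eq_self [DecidableEq ι] {v : ι → R}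
    (hM : M ∈ rowStochastic R ι) (hvM : v ᵥ* M = v) : |v| ᵥ* M = |v| := by
  have hle (j : ι) : |v j| ≤ (|v| ᵥ* M) j := calc
    |v j| = |∑ i, v i * M i j| := congrArg (fun u : ι → R => |u j|) hvM.symm
    _ ≤ ∑ i, |v i * M i j| := Finset.abs_sum_le_sum_abs _ _
    _ = ∑ i, |v i| * M i j := by simp_rw [abs_mul, abs_of_nonneg (hM.1 _ j)]
  have hsum : ∑ j, |v j| = ∑ j, (|v| ᵥ* M) j := by
    rw [← dotProduct_one, ← dotProduct_one, ← dotProduct_mulVec, hM.2]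
    rfl
  funext j
  exact ((Finset.sum_eq_sum_iff_of_le fun j _ => hle j).1 hsum j (Finset.mem_univ j)).symm

-- For `w = u - v`, the invariant vector `|w| - w ≥ 0` vanishes where `w` is positive,
-- hence everywhere.
theorem eq_of_vecMul_eq_self_of_sum_eq [DecidableEq ι] {u v : ι → R}
    (hM : M ∈ rowStochastic R ι) (hirr : M.IsIrreducible) (hu : u ᵥ* M = u)
    (hv : v ᵥ* M = v) (huv : ∑ i, u i = ∑ i, v i) : u = v := by
  set w := u - v
  have hw : w ᵥ* M = w := by rw [sub_vecMul, hu, hv]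
  have hsum : ∑ i, w i = 0 := by simp [w, huv]
  by_contra hne
  obtain ⟨i, hi⟩ := Function.ne_iff.1 (sub_ne_zero.2 hne)
  obtain ⟨j, -, hj⟩ :=
    Finset.exists_pos_of_sum_zero_of_exists_nonzero w hsum ⟨i, Finset.mem_univ i, hi⟩
  have habs : |w| - w = 0 :=
    eq_zero_of_vecMul_eq_self_of_apply_eq_zero (j := j) hirr (sub_nonneg.2 (le_abs_self w))
      (by rw [sub_vecMul, abs_vecMul_eq_abs_of_vecMul_eq_self hM hw, hw])
      (sub_eq_zero.2 (abs_of_pos hj))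
  have hw_nonneg : 0 ≤ w := sub_eq_zero.1 habs ▸ abs_nonneg w
  exact hi ((Finset.sum_eq_zero_iff_of_nonneg fun l _ => hw_nonneg l).1 hsum i (Finset.mem_univ i))

end OrderedRing

theorem exists_ne_zero_vecMul_eq_self [CommRing R] [IsDomain R] [Nonempty ι] {M : Matrix ι ι R}
    (hM : M *ᵥ 1 = 1) : ∃ v ≠ 0, v ᵥ* M = v := by
  classical
  have hdet : (M - 1).det = 0 := exists_mulVec_eq_zero_iff.1
    ⟨1, one_ne_zero, by rw [sub_mulVec, one_mulVec, hM, sub_self]⟩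
  obtain ⟨v, hv0, hv⟩ := exists_vecMul_eq_zero_iff.2 hdet
  exact ⟨v, hv0, by rwa [vecMul_sub, vecMul_one, sub_eq_zero] at hv⟩

section OrderedField

variable [Field R] [LinearOrder R] [IsStrictOrderedRing R] {A M : Matrix ι ι R}

theorem inv_sum_smul_mem_stdSimplex {v : ι → R} (hv : 0 ≤ v) (hv0 : v ≠ 0) :
    (∑ i, v i)⁻¹ • v ∈ stdSimplex R ι := by
  have hsum : 0 < ∑ i, v i := Fintype.sum_pos (lt_of_le_of_ne hv hv0.symm)
  refine ⟨fun i => mul_nonneg (inv_nonneg.2 hsum.le) (hv i), ?_⟩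
  simp only [Pi.smul_apply, smul_eq_mul, ← Finset.mul_sum, inv_mul_cancel₀ hsum.ne']

theorem exists_mem_stdSimplex_vecMul_eq_self [DecidableEq ι] [Nonempty ι]
    (hM : M ∈ rowStochastic R ι) : ∃ μ ∈ stdSimplex R ι, μ ᵥ* M = μ := by
  obtain ⟨v, hv0, hv⟩ := exists_ne_zero_vecMul_eq_self hM.2
  have habs0 : |v| ≠ 0 := fun h => hv0 (funext fun i => abs_eq_zero.1 (congrFun h i))
  refine ⟨_, inv_sum_smul_mem_stdSimplex (abs_nonneg v) habs0, ?_⟩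
  rw [smul_vecMul, abs_vecMul_eq_abs_of_vecMul_eq_self hM hv]

theorem existsUnique_mem_stdSimplex_vecMul_eq_self [DecidableEq ι] [Nonempty ι]
    (hM : M ∈ rowStochastic R ι) (hirr : M.IsIrreducible) :
    ∃! μ, μ ∈ stdSimplex R ι ∧ μ ᵥ* M = μ := by
  obtain ⟨μ, hμ, hμM⟩ := exists_mem_stdSimplex_vecMul_eq_self hM
  refine ⟨μ, ⟨hμ, hμM⟩, fun ν hν => ?_⟩
  exact eq_of_vecMul_eq_self_of_sum_eq hM hirr hν.2 hμM (hν.1.2.trans hμ.2.symm)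

theorem exists_pos_forall_le_of_vecMul_eq_self [Nonempty ι] (hA : A.IsIrreducible) :
    ∃ ε > 0, ∀ M : Matrix ι ι R, (∀ i j, A i j ≤ M i j) →
      ∀ μ ∈ stdSimplex R ι, μ ᵥ* M = μ → ∀ j, ε ≤ μ j := by
  classical
  obtain ⟨η, hη, hηA⟩ := exists_pos_forall_exists_le_pow_apply hA
  have hcard : (0 : R) < Fintype.card ι := Nat.cast_pos.2 Fintype.card_pos
  refine ⟨η / Fintype.card ι, div_pos hη hcard, fun M hAM μ hμ hμM j => ?_⟩
  refine (div_le_iff₀' hcard).2 (le_card_mul_of_forall_exists_le_pow_apply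
    (fun i l => (hA.nonneg i l).trans (hAM i l)) hμ hμM fun i => ?_)
  obtain ⟨k, hk⟩ := hηA i j
  exact ⟨k, hk.trans (pow_apply_le_pow_apply hA.nonneg hAM k i j)⟩

end OrderedField

end InvariantVectors

theorem prod_mem_stdSimplex {ι R : Type*} [Fintype ι] [DecidableEq ι] [CommSemiring R]
    [PartialOrder R] [IsOrderedRing R] {Y : ι → Type*} [∀ i, Fintype (Y i)] {f : ∀ i, Y i → R}
    (hf : ∀ i, f i ∈ stdSimplex R (Y i)) :
    (fun y : ∀ i, Y i => ∏ i, f i (y i)) ∈ stdSimplex R (∀ i, Y i) := by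
  refine ⟨fun y => Finset.prod_nonneg fun i _ => (hf i).1 (y i), ?_⟩
  rw [← Fintype.prod_sum]
  exact Finset.prod_eq_one fun i _ => (hf i).2

section Policies

variable {n : ℕ} {S A : Fin n → Type} {P : ∀ i : Fin n, (∀ j, S j) → A i → S i → ℝ}
variable {ζ ζb : ∀ i : Fin n, (∀ j, S j) → A i → ℝ}

theorem jprob_mem_stdSimplex [∀ i, Fintype (A i)] (hζ : IsPolicy ζ) (s : ∀ j, S j) :
    jprob ζ s ∈ stdSimplex ℝ (∀ i, A i) :=
  prod_mem_stdSimplex fun i => hζ i s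

theorem Pglob_mem_stdSimplex [∀ i, Fintype (S i)] (hP : IsKernel P) (s : ∀ j, S j)
    (a : ∀ i, A i) : Pglob P s a ∈ stdSimplex ℝ (∀ j, S j) :=
  prod_mem_stdSimplex fun i => hP i s (a i)

theorem Pmat_mem_rowStochastic [∀ i, Fintype (S i)] [∀ i, DecidableEq (S i)]
    [∀ i, Fintype (A i)] (hP : IsKernel P) (hζ : IsPolicy ζ) :
    Pmat P ζ ∈ Matrix.rowStochastic ℝ (∀ j, S j) := by
  have row_mem (s : ∀ j, S j) : Pmat P ζ s ∈ stdSimplex ℝ (∀ j, S j) := by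
    have hrow : Pmat P ζ s = ∑ a, jprob ζ s a • Pglob P s a := by
      ext s'
      simp only [Pmat, Matrix.of_apply, Finset.sum_apply, Pi.smul_apply, smul_eq_mul]
    rw [hrow]
    exact (convex_stdSimplex ℝ _).sum_mem (fun a _ => (jprob_mem_stdSimplex hζ s).1 a)
      (jprob_mem_stdSimplex hζ s).2 fun a _ => Pglob_mem_stdSimplex hP s a
  exact Matrix.mem_rowStochastic_iff_sum.2 ⟨fun s => (row_mem s).1, fun s => (row_mem s).2⟩

theorem smul_Pmat_apply_le [∀ i, Fintype (S i)] [∀ i, Fintype (A i)] {δ : ℝ}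
    (hP : IsKernel P) (hζb : IsPolicy ζb) (hδ : 0 ≤ δ) (hζδ : ∀ s a, δ ≤ jprob ζ s a)
    (s s' : ∀ j, S j) : (δ • Pmat P ζb) s s' ≤ Pmat P ζ s s' := by
  simp only [Pmat, Matrix.smul_apply, Matrix.of_apply, smul_eq_mul, Finset.mul_sum, ← mul_assoc]
  refine Finset.sum_le_sum fun a _ =>
    mul_le_mul_of_nonneg_right ?_ ((Pglob_mem_stdSimplex hP s a).1 s')
  have hle_one := (mem_Icc_of_mem_stdSimplex (jprob_mem_stdSimplex hζb s) a).2
  exact (mul_le_of_le_one_right hδ hle_one).trans (hζδ s a)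

end Policies

theorem stmt_17_general {n : ℕ} {S A : Fin n → Type}
    [∀ i, Fintype (S i)] [∀ i, Fintype (A i)]
    [∀ i, DecidableEq (S i)] [∀ i, Nonempty (S i)]
    {P : ∀ i : Fin n, (∀ j, S j) → A i → S i → ℝ} (hP : IsKernel P)
    {ζb : ∀ i : Fin n, (∀ j, S j) → A i → ℝ} (hζb : IsPolicy ζb)
    (hirr : MatIrreducible (Pmat P ζb)) {δ : ℝ} (hδ : 0 < δ) :
    (∀ ζ : ∀ i : Fin n, (∀ j, S j) → A i → ℝ, IsPolicy ζ →
      (∀ s a, δ ≤ jprob ζ s a) →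
      ∃! μ : (∀ j, S j) → ℝ, IsStationary (Pmat P ζ) μ) ∧
    (∃ ε : ℝ, 0 < ε ∧
      ∀ ζ : ∀ i : Fin n, (∀ j, S j) → A i → ℝ, IsPolicy ζ →
        (∀ s a, δ ≤ jprob ζ s a) →
        ∀ μ : (∀ j, S j) → ℝ, IsStationary (Pmat P ζ) μ → ∀ s, ε ≤ μ s) := by
  have minorant_irreducible : (δ • Pmat P ζb).IsIrreducible := isIrreducible_smul hδ <|
    (Matrix.isIrreducible_iff_exists_pow_pos (Pmat_mem_rowStochastic hP hζb).1).2 hirr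
  constructor
  · intro ζ hζ hζδ
    exact existsUnique_mem_stdSimplex_vecMul_eq_self (Pmat_mem_rowStochastic hP hζ)
      (isIrreducible_of_le minorant_irreducible (smul_Pmat_apply_le hP hζb hδ.le hζδ))
  · obtain ⟨ε, hε, le_stationary⟩ := exists_pos_forall_le_of_vecMul_eq_self minorant_irreducible
    exact ⟨ε, hε, fun ζ _ hζδ μ hμ =>
      le_stationary (Pmat P ζ) (smul_Pmat_apply_le hP hζb hδ.le hζδ) μ hμ.1 hμ.2⟩

/-- if some joint policy `ζ_b` induces an irreducible and aperiodic chain,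
then every `ζ ∈ Π_δ` admits a unique stationary distribution `μ^ζ`, and
`μ_min = inf_{ζ ∈ Π_δ} min_s μ^ζ(s) > 0`. -/
theorem stmt_17 {n : ℕ} (G : SimpleGraph (Fin n))
    (S A : Fin n → Type)
    [∀ i, Fintype (S i)] [∀ i, Fintype (A i)]
    [∀ i, DecidableEq (S i)] [∀ i, DecidableEq (A i)]
    [∀ i, Nonempty (S i)] [∀ i, Nonempty (A i)]
    (P : ∀ i : Fin n, (∀ j, S j) → A i → S i → ℝ)
    (hP : IsKernel P) (hPloc : IsLocalKernel G P)
    (ζb : ∀ i : Fin n, (∀ j, S j) → A i → ℝ) (hζb : IsPolicy ζb)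
    (hirr : MatIrreducible (Pmat P ζb)) (hap : MatAperiodic (Pmat P ζb))
    (δ : ℝ) (hδ : 0 < δ) :
    (∀ ζ : ∀ i : Fin n, (∀ j, S j) → A i → ℝ, IsPolicy ζ →
      (∀ s a, δ ≤ jprob ζ s a) →
      ∃! μ : (∀ j, S j) → ℝ, IsStationary (Pmat P ζ) μ) ∧
    (∃ ε : ℝ, 0 < ε ∧
      ∀ ζ : ∀ i : Fin n, (∀ j, S j) → A i → ℝ, IsPolicy ζ →
        (∀ s a, δ ≤ jprob ζ s a) →
        ∀ μ : (∀ j, S j) → ℝ, IsStationary (Pmat P ζ) μ → ∀ s, ε ≤ μ s) := by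
  exact stmt_17_general hP hζb hirr hδ

end LPI
end
end

section
/- Suppose there exists a joint policy ζ_b such that the induced transition matrix P_{ζ_b} on S is irreducible and aperiodic, and fix δ > 0. Then there exist constants C > 0 and ρ ∈ (0,1) such that for every ζ ∈ Π_δ, every initial state s ∈ S, and every t ≥ 0: TV( P_ζ^t(s, ·), μ^ζ ) ≤ C ρ^t, where μ^ζ is the unique stationary distribution of P_ζ and P_ζ^t(s,·) is the s-th row of the t-th matrix power of P_ζ. -/
open scoped BigOperators

noncomputable section

namespace LPI

variable {n : ℕ} {S A : Fin n → Type}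
variable [∀ i, Fintype (S i)] [∀ i, Fintype (A i)]
variable [∀ i, DecidableEq (S i)] [∀ i, DecidableEq (A i)]
variable [∀ i, Nonempty (S i)] [∀ i, Nonempty (A i)]

/-!
A policy `ζ ∈ Π_δ` plays every action with probability at least `δ ≥ δ ζ_b`, so `P_ζ` dominates the
single matrix `δ P_{ζ_b}` entrywise. Irreducibility and aperiodicity make some power
`(δ P_{ζ_b}) ^ N` positive, say with entries at least `ε > 0`; then all the entries of `P_ζ ^ N` are
at least `ε` too, for the same `N` and `ε`. By Doeblin's argument `P_ζ ^ N` contracts total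
variation by the factor `1 - |S| ε`, which gives a geometric rate independent of `ζ`.
-/

section UniformMixing

open Filter Topology Matrix

section Distributions

variable {X Y : Type} [Fintype X] [Fintype Y]

lemma IsDist.pi {ι : Type} [Fintype ι] [DecidableEq ι] {α : ι → Type} [∀ i, Fintype (α i)]
    {d : ∀ i, α i → ℝ} (hd : ∀ i, IsDist (d i)) :
    IsDist fun a : ∀ i, α i => ∏ i, d i (a i) := by
  refine ⟨fun a => Finset.prod_nonneg fun i _ => (hd i).1 (a i), ?_⟩
  rw [← Fintype.prod_sum]
  exact Finset.prod_eq_one fun i _ => (hd i).2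

lemma IsDist.bind {d : X → ℝ} {K : X → Y → ℝ} (hd : IsDist d) (hK : ∀ x, IsDist (K x)) :
    IsDist fun y => ∑ x, d x * K x y := by
  refine ⟨fun y => Finset.sum_nonneg fun x _ => mul_nonneg (hd.1 x) ((hK x).1 y), ?_⟩
  rw [Finset.sum_comm]
  simp only [← Finset.mul_sum, (hK _).2, mul_one, hd.2]

lemma IsDist.le_one {d : X → ℝ} (hd : IsDist d) (x : X) : d x ≤ 1 :=
  hd.2 ▸ Finset.single_le_sum (fun y _ => hd.1 y) (Finset.mem_univ x)

lemma mem_rowStochastic_iff_isDist [DecidableEq X] {M : Matrix X X ℝ} :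
    M ∈ rowStochastic ℝ X ↔ ∀ x, IsDist (M x) :=
  mem_rowStochastic_iff_sum.trans forall_and.symm

lemma tv_nonneg (p q : X → ℝ) : 0 ≤ tv p q :=
  mul_nonneg (by norm_num) (Finset.sum_nonneg fun _ _ => abs_nonneg _)

lemma eq_of_tv_nonpos {p q : X → ℝ} (h : tv p q ≤ 0) : p = q := by
  have hsum : ∑ x, |p x - q x| = 0 :=
    (mul_eq_zero.1 (h.antisymm (tv_nonneg p q))).resolve_left (by norm_num)
  funext x
  have hx := (Finset.sum_eq_zero_iff_of_nonneg fun y _ => abs_nonneg (p y - q y)).1 hsum x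
    (Finset.mem_univ x)
  exact sub_eq_zero.1 (abs_eq_zero.1 hx)

lemma tv_le_one {p q : X → ℝ} (hp : IsDist p) (hq : IsDist q) : tv p q ≤ 1 := by
  have hsum : ∑ x, |p x - q x| ≤ ∑ x, (p x + q x) :=
    Finset.sum_le_sum fun x _ => by
      simpa only [abs_of_nonneg (hp.1 x), abs_of_nonneg (hq.1 x)] using abs_sub (p x) (q x)
  rw [Finset.sum_add_distrib, hp.2, hq.2] at hsum
  unfold tv
  linarith

lemma tv_vecMul_le {K : Matrix X Y ℝ} {c : ℝ} (hK : ∀ x y, 0 ≤ K x y)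
    (hc : ∀ x, ∑ y, K x y = c) (p q : X → ℝ) : tv (p ᵥ* K) (q ᵥ* K) ≤ c * tv p q := by
  have hentry (y : Y) : |(p ᵥ* K) y - (q ᵥ* K) y| ≤ ∑ x, |p x - q x| * K x y := by
    rw [← Pi.sub_apply, ← sub_vecMul]
    refine (Finset.abs_sum_le_sum_abs _ _).trans_eq (Finset.sum_congr rfl fun x _ => ?_)
    rw [abs_mul, abs_of_nonneg (hK x y), Pi.sub_apply]
  calc tv (p ᵥ* K) (q ᵥ* K)
      ≤ 1 / 2 * ∑ y, ∑ x, |p x - q x| * K x y :=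
        mul_le_mul_of_nonneg_left (Finset.sum_le_sum fun y _ => hentry y) (by norm_num)
    _ = 1 / 2 * ((∑ x, |p x - q x|) * c) := by
        rw [Finset.sum_comm, Finset.sum_mul]
        simp only [← Finset.mul_sum, hc]
    _ = c * tv p q := by unfold tv; ring

-- Subtracting `ε` from every entry of `K` changes neither side of `p ᵥ* K - q ᵥ* K`, because `p`
-- and `q` have the same mass, and leaves a nonnegative matrix with smaller row sums.
lemma tv_vecMul_le_of_forall_le {K : Matrix X Y ℝ} {ε : ℝ} (hε : ∀ x y, ε ≤ K x y)
    (hK : ∀ x, ∑ y, K x y = 1) {p q : X → ℝ} (hpq : ∑ x, p x = ∑ x, q x) :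
    tv (p ᵥ* K) (q ᵥ* K) ≤ (1 - Fintype.card Y * ε) * tv p q := by
  set K' : Matrix X Y ℝ := of fun x y => K x y - ε with hK'
  have hsub (r : X → ℝ) (y : Y) : (r ᵥ* K) y = (r ᵥ* K') y + (∑ x, r x) * ε := by
    simp only [hK', vecMul, dotProduct, of_apply, mul_sub, Finset.sum_sub_distrib, Finset.sum_mul,
      sub_add_cancel]
  have htv : tv (p ᵥ* K) (q ᵥ* K) = tv (p ᵥ* K') (q ᵥ* K') := by
    simp only [tv, hsub, hpq, add_sub_add_right_eq_sub]
  rw [htv]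
  exact tv_vecMul_le (fun x y => sub_nonneg.2 (hε x y))
    (fun x => by simp [Finset.sum_sub_distrib, hK]) p q

end Distributions

section NonnegativeMatrices

variable {X : Type*} [Fintype X] [DecidableEq X]

lemma pow_apply_le_pow_apply_s18 {R : Type*} [Ring R] [PartialOrder R] [IsOrderedRing R]
    {L M : Matrix X X R} (hL : ∀ x y, 0 ≤ L x y) (hLM : ∀ x y, L x y ≤ M x y) (t : ℕ) (x y : X) :
    (L ^ t) x y ≤ (M ^ t) x y := by
  induction t generalizing y with
  | zero => simp only [pow_zero, le_refl]
  | succ t ih =>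
    have hM (x y : X) : 0 ≤ M x y := (hL x y).trans (hLM x y)
    simp only [pow_succ, mul_apply]
    exact Finset.sum_le_sum fun z _ =>
      mul_le_mul (ih z) (hLM z y) (hL z y) (pow_apply_nonneg hM t x z)

lemma pow_add_apply_pos {R : Type*} [Ring R] [LinearOrder R] [IsStrictOrderedRing R]
    {M : Matrix X X R} (hM : ∀ x y, 0 ≤ M x y) {s t : ℕ} {x y z : X} (hs : 0 < (M ^ s) x y)
    (ht : 0 < (M ^ t) y z) : 0 < (M ^ (s + t)) x z := by
  rw [pow_add, mul_apply]
  exact Finset.sum_pos'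
    (fun w _ => mul_nonneg (pow_apply_nonneg hM s x w) (pow_apply_nonneg hM t w z))
    ⟨y, Finset.mem_univ y, mul_pos hs ht⟩

lemma isPrimitive_of_le {R : Type*} [Ring R] [LinearOrder R] [IsOrderedRing R]
    {L M : Matrix X X R} (hL : L.IsPrimitive) (hLM : ∀ x y, L x y ≤ M x y) : M.IsPrimitive := by
  obtain ⟨hL0, N, hN, hpos⟩ := hL
  exact ⟨fun x y => (hL0 x y).trans (hLM x y), N, hN,
    fun x y => (hpos x y).trans_le (pow_apply_le_pow_apply_s18 hL0 hLM N x y)⟩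

lemma isPrimitive_smul {R : Type*} [CommRing R] [LinearOrder R] [IsStrictOrderedRing R]
    {M : Matrix X X R} (hM : M.IsPrimitive) {c : R} (hc : 0 < c) : (c • M).IsPrimitive := by
  obtain ⟨hM0, N, hN, hpos⟩ := hM
  refine ⟨fun x y => mul_nonneg hc.le (hM0 x y), N, hN, fun x y => ?_⟩
  rw [smul_pow]
  exact mul_pos (pow_pos hc N) (hpos x y)

lemma sum_vecMul_of_mem_rowStochastic {R : Type*} [CommSemiring R] [PartialOrder R]
    [IsOrderedRing R] {M : Matrix X X R} (hM : M ∈ rowStochastic R X) (v : X → R) :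
    ∑ y, (v ᵥ* M) y = ∑ x, v x := by
  simpa only [mulVec_transpose] using
    sum_mulVec_of_mem_colStochastic (x := v)
      (transpose_mem_colStochastic_iff_mem_rowStochastic.2 hM)

lemma abs_vecMul_eq_of_vecMul_eq {R : Type*} [CommRing R] [LinearOrder R] [IsOrderedRing R]
    {M : Matrix X X R} (hM : M ∈ rowStochastic R X) {v : X → R} (hv : v ᵥ* M = v) :
    |v| ᵥ* M = |v| := by
  have hle (y : X) : |v| y ≤ (|v| ᵥ* M) y := by
    calc |v| y = |∑ x, v x * M x y| := congrArg abs (congrFun hv y).symm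
      _ ≤ ∑ x, |v x * M x y| := Finset.abs_sum_le_sum_abs _ _
      _ = (|v| ᵥ* M) y := Finset.sum_congr rfl fun x _ => by
        rw [abs_mul, abs_of_nonneg (hM.1 x y), Pi.abs_apply]
  have heq := (Finset.sum_eq_sum_iff_of_le fun y _ => hle y).1
    (sum_vecMul_of_mem_rowStochastic hM |v|).symm
  exact funext fun y => (heq y (Finset.mem_univ y)).symm

lemma exists_minorization_of_isPrimitive {L : Matrix X X ℝ} (hL : L.IsPrimitive) :
    ∃ (N : ℕ) (ε : ℝ), 0 < N ∧ 0 < ε ∧ Fintype.card X * ε < 1 ∧ ∀ x y, ε ≤ (L ^ N) x y := by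
  obtain ⟨-, N, hN, hpos⟩ := hL
  have hle : ∀ᶠ ε : ℝ in 𝓝[>] 0, ∀ x y, ε ≤ (L ^ N) x y :=
    eventually_all.2 fun x => eventually_all.2 fun y =>
      nhdsWithin_le_nhds (Iic_mem_nhds (hpos x y))
  have hcard : ∀ᶠ ε : ℝ in 𝓝[>] 0, Fintype.card X * ε < 1 := by
    refine nhdsWithin_le_nhds (ContinuousAt.eventually_lt (by fun_prop) continuousAt_const ?_)
    simp only [mul_zero, zero_lt_one]
  obtain ⟨ε, hε, hcardε, hleε⟩ := (eventually_mem_nhdsWithin.and (hcard.and hle)).exists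
  exact ⟨N, ε, hN, hε, hcardε, hleε⟩

end NonnegativeMatrices

section Primitivity

variable {X : Type} [Fintype X] [DecidableEq X] {M : Matrix X X ℝ}

-- The return times to `x` form a numerical semigroup of gcd one, so they are cofinite.
lemma eventually_pow_apply_self_pos (hM : ∀ x y, 0 ≤ M x y) (hap : MatAperiodic M) (x : X) :
    ∀ᶠ t in atTop, 0 < (M ^ t) x x := by
  let returnTimes : AddSubmonoid ℕ :=
    { carrier := {t | 0 < (M ^ t) x x}
      zero_mem' := by simp
      add_mem' := pow_add_apply_pos hM }
  have hgcd : Nat.setGcd (returnTimes : Set ℕ) = 1 :=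
    hap x _ fun t _ ht => Nat.setGcd_dvd_of_mem (s := (returnTimes : Set ℕ)) ht
  obtain ⟨m, hm⟩ := Nat.exists_mem_closure_of_ge (returnTimes : Set ℕ)
  rw [AddSubmonoid.closure_eq, hgcd] at hm
  filter_upwards [eventually_ge_atTop m] with t ht
  exact hm t ht (one_dvd t)

lemma isPrimitive_of_matIrreducible_of_matAperiodic (hM : ∀ x y, 0 ≤ M x y)
    (hirr : MatIrreducible M) (hap : MatAperiodic M) : M.IsPrimitive := by
  have hpos : ∀ᶠ t in atTop, ∀ x y, 0 < (M ^ t) x y := by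
    refine eventually_all.2 fun x => eventually_all.2 fun y => ?_
    obtain ⟨r, -, hr⟩ := hirr x y
    filter_upwards [(tendsto_sub_atTop_nat r).eventually (eventually_pow_apply_self_pos hM hap x),
      eventually_ge_atTop r] with t ht hrt
    simpa only [Nat.sub_add_cancel hrt] using pow_add_apply_pos hM ht hr
  obtain ⟨N, hN, hposN⟩ := ((eventually_gt_atTop 0).and hpos).exists
  exact ⟨hM, N, hN, hposN⟩

end Primitivity

section StationaryDistributions

variable {X : Type} [Fintype X] [DecidableEq X] {M : Matrix X X ℝ} {μ ν : X → ℝ}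

-- `M` fixes the constant column vector, hence it fixes a nonzero row vector `v`; the normalization
-- of `|v|` is stationary.
theorem exists_isStationary [Nonempty X] (hM : M ∈ rowStochastic ℝ X) :
    ∃ μ, IsStationary M μ := by
  have hdet : (M - 1).det = 0 :=
    exists_mulVec_eq_zero_iff.1 ⟨1, one_ne_zero, by rw [sub_mulVec, hM.2, one_mulVec, sub_self]⟩
  obtain ⟨v, hv0, hv⟩ := exists_vecMul_eq_zero_iff.2 hdet
  rw [vecMul_sub, vecMul_one, sub_eq_zero] at hv
  have hmass : 0 < ∑ x, |v| x :=
    let ⟨x, hx⟩ := Function.ne_iff.1 hv0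
    Finset.sum_pos' (fun y _ => abs_nonneg (v y)) ⟨x, Finset.mem_univ x, abs_pos.2 hx⟩
  refine ⟨(∑ x, |v| x)⁻¹ • |v|,
    ⟨fun x => mul_nonneg (inv_nonneg.2 hmass.le) (abs_nonneg (v x)), ?_⟩, ?_⟩
  · simp only [Pi.smul_apply, smul_eq_mul, ← Finset.mul_sum]
    exact inv_mul_cancel₀ hmass.ne'
  · rw [smul_vecMul, abs_vecMul_eq_of_vecMul_eq hM hv]

lemma IsStationary.vecMul_pow (hμ : IsStationary M μ) (t : ℕ) : μ ᵥ* M ^ t = μ := by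
  induction t with
  | zero => rw [pow_zero, vecMul_one]
  | succ t ih => rw [pow_succ, ← vecMul_vecMul, ih, hμ.2]

lemma IsStationary.eq_of_isPrimitive [Nonempty X] (hM : M ∈ rowStochastic ℝ X)
    (hprim : M.IsPrimitive) (hμ : IsStationary M μ) (hν : IsStationary M ν) : μ = ν := by
  obtain ⟨N, ε, -, hε0, -, hε⟩ := exists_minorization_of_isPrimitive hprim
  have hcontract := tv_vecMul_le_of_forall_le hε (sum_row_of_mem_rowStochastic (pow_mem hM N))
    (hμ.1.2.trans hν.1.2.symm)
  rw [hμ.vecMul_pow, hν.vecMul_pow] at hcontract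
  have hcard : 0 < Fintype.card X * ε := by positivity
  exact eq_of_tv_nonpos (nonpos_of_mul_nonpos_right (by linarith) hcard)

theorem existsUnique_isStationary_of_isPrimitive [Nonempty X] (hM : M ∈ rowStochastic ℝ X)
    (hprim : M.IsPrimitive) : ∃! μ, IsStationary M μ := by
  obtain ⟨μ, hμ⟩ := exists_isStationary hM
  exact ⟨μ, hμ, fun _ hν => hν.eq_of_isPrimitive hM hprim hμ⟩

end StationaryDistributions

section GeometricMixing

lemma pow_mul_le_pow_mul_of_forall_add_le {R : Type*} [CommRing R] [PartialOrder R]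
    [IsOrderedRing R] {a : ℕ → R} {ρ : R} {N : ℕ} (hN : 0 < N) (hρ0 : 0 ≤ ρ) (hρ1 : ρ ≤ 1)
    (ha0 : 0 ≤ a 0) (ha : ∀ t, a t ≤ a 0) (hstep : ∀ t, a (t + N) ≤ ρ ^ N * a t) (t : ℕ) :
    ρ ^ N * a t ≤ ρ ^ t * a 0 := by
  induction t using Nat.strong_induction_on with
  | _ t ih =>
    rcases lt_or_ge t N with htN | hNt
    · exact (mul_le_mul_of_nonneg_left (ha t) (pow_nonneg hρ0 N)).trans
        (mul_le_mul_of_nonneg_right (pow_le_pow_of_le_one hρ0 hρ1 htN.le) ha0)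
    · obtain ⟨u, rfl⟩ := Nat.exists_eq_add_of_le' hNt
      calc ρ ^ N * a (u + N) ≤ ρ ^ N * (ρ ^ N * a u) :=
            mul_le_mul_of_nonneg_left (hstep u) (pow_nonneg hρ0 N)
        _ ≤ ρ ^ N * (ρ ^ u * a 0) :=
            mul_le_mul_of_nonneg_left (ih u (Nat.lt_add_of_pos_right hN)) (pow_nonneg hρ0 N)
        _ = ρ ^ (u + N) * a 0 := by ring

variable {X : Type} [Fintype X] [DecidableEq X]

lemma tv_vecMul_pow_le {M : Matrix X X ℝ} (hM : M ∈ rowStochastic ℝ X) {N : ℕ} (hN : 0 < N)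
    {ε ρ : ℝ} (hε : ∀ x y, ε ≤ (M ^ N) x y) (hρ0 : 0 ≤ ρ) (hρ1 : ρ ≤ 1)
    (hρ : 1 - Fintype.card X * ε ≤ ρ ^ N) {p q : X → ℝ} (hpq : ∑ x, p x = ∑ x, q x) (t : ℕ) :
    ρ ^ N * tv (p ᵥ* M ^ t) (q ᵥ* M ^ t) ≤ ρ ^ t * tv p q := by
  have hpow (t : ℕ) : M ^ t ∈ rowStochastic ℝ X := pow_mem hM t
  have hmass (t : ℕ) : ∑ x, (p ᵥ* M ^ t) x = ∑ x, (q ᵥ* M ^ t) x := by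
    simp only [sum_vecMul_of_mem_rowStochastic (hpow t), hpq]
  have hnonexpansive (t : ℕ) : tv (p ᵥ* M ^ t) (q ᵥ* M ^ t) ≤ tv p q := by
    simpa only [one_mul] using
      tv_vecMul_le (hpow t).1 (sum_row_of_mem_rowStochastic (hpow t)) p q
  have hcontract (t : ℕ) : tv (p ᵥ* M ^ (t + N)) (q ᵥ* M ^ (t + N)) ≤
      ρ ^ N * tv (p ᵥ* M ^ t) (q ᵥ* M ^ t) := by
    rw [pow_add, ← vecMul_vecMul, ← vecMul_vecMul]
    exact (tv_vecMul_le_of_forall_le hε (sum_row_of_mem_rowStochastic (hpow N)) (hmass t)).trans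
      (mul_le_mul_of_nonneg_right hρ (tv_nonneg _ _))
  simpa only [pow_zero, vecMul_one] using
    pow_mul_le_pow_mul_of_forall_add_le (a := fun t => tv (p ᵥ* M ^ t) (q ᵥ* M ^ t)) hN hρ0 hρ1
      (tv_nonneg _ _) (by simpa only [pow_zero, vecMul_one] using hnonexpansive) hcontract t

lemma tv_pow_row_le {M : Matrix X X ℝ} (hM : M ∈ rowStochastic ℝ X) {N : ℕ} (hN : 0 < N)
    {ε ρ : ℝ} (hε : ∀ x y, ε ≤ (M ^ N) x y) (hρ0 : 0 < ρ) (hρ1 : ρ ≤ 1)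
    (hρ : 1 - Fintype.card X * ε ≤ ρ ^ N) {μ : X → ℝ} (hμ : IsStationary M μ) (x : X) (t : ℕ) :
    tv ((M ^ t) x) μ ≤ (ρ ^ N)⁻¹ * ρ ^ t := by
  have hx : IsDist (Pi.single x 1 : X → ℝ) := single_mem_stdSimplex ℝ x
  have hdecay := tv_vecMul_pow_le hM hN hε hρ0.le hρ1 hρ (hx.2.trans hμ.1.2.symm) t
  rw [single_one_vecMul, hμ.vecMul_pow] at hdecay
  rw [le_inv_mul_iff₀ (pow_pos hρ0 N)]
  exact hdecay.trans (mul_le_of_le_one_right (pow_nonneg hρ0.le t) (tv_le_one hx hμ.1))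

theorem exists_uniform_geometric_mixing_of_isPrimitive [Nonempty X] {L : Matrix X X ℝ}
    (hL : L.IsPrimitive) :
    ∃ C ρ : ℝ, 0 < C ∧ 0 < ρ ∧ ρ < 1 ∧
      ∀ M ∈ rowStochastic ℝ X, (∀ x y, L x y ≤ M x y) →
        (∃! μ, IsStationary M μ) ∧
        ∀ μ, IsStationary M μ → ∀ x t, tv ((M ^ t) x) μ ≤ C * ρ ^ t := by
  obtain ⟨N, ε, hN, hε0, hcardε, hε⟩ := exists_minorization_of_isPrimitive hL
  have hcardε0 : 0 < Fintype.card X * ε := by positivity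
  set β : ℝ := 1 - Fintype.card X * ε
  have hβ0 : 0 < β := by linarith
  have hβ1 : β < 1 := by linarith
  set ρ : ℝ := β ^ (N : ℝ)⁻¹
  have hρN : ρ ^ N = β := Real.rpow_inv_natCast_pow hβ0.le hN.ne'
  have hρ0 : 0 < ρ := Real.rpow_pos_of_pos hβ0 _
  have hρ1 : ρ < 1 := Real.rpow_lt_one hβ0.le hβ1 (by positivity)
  refine ⟨(ρ ^ N)⁻¹, ρ, by positivity, hρ0, hρ1, fun M hM hLM => ⟨?_, fun μ hμ x t => ?_⟩⟩
  · exact existsUnique_isStationary_of_isPrimitive hM (isPrimitive_of_le hL hLM)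
  · have hεM (x y : X) : ε ≤ (M ^ N) x y :=
      (hε x y).trans (pow_apply_le_pow_apply_s18 hL.nonneg hLM N x y)
    exact tv_pow_row_le hM hN hεM hρ0 hρ1.le hρN.ge hμ x t

end GeometricMixing

section DecisionProcesses

variable {X U : Type} [Fintype U]

/-- The transition matrix of the Markov chain on `X` induced by the randomized policy `π` in the
Markov decision process with kernel `K`, where `K x u y` is the probability of moving from `x` to
`y` under the action `u`. -/
def transitionMatrix (K : X → U → X → ℝ) (π : X → U → ℝ) : Matrix X X ℝ :=
  of fun x y => ∑ u, π x u * K x u y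

variable {K : X → U → X → ℝ}

lemma smul_transitionMatrix_apply_le (hK : ∀ x u y, 0 ≤ K x u y) {π π' : X → U → ℝ} {δ : ℝ}
    (hπ : ∀ x u, δ * π x u ≤ π' x u) (x y : X) :
    (δ • transitionMatrix K π) x y ≤ transitionMatrix K π' x y := by
  simp only [transitionMatrix, Matrix.smul_apply, of_apply, smul_eq_mul, Finset.mul_sum,
    ← mul_assoc]
  exact Finset.sum_le_sum fun u _ => mul_le_mul_of_nonneg_right (hπ x u) (hK x u y)

variable [Fintype X] [DecidableEq X]

lemma transitionMatrix_mem_rowStochastic (hK : ∀ x u, IsDist (K x u)) {π : X → U → ℝ}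
    (hπ : ∀ x, IsDist (π x)) : transitionMatrix K π ∈ rowStochastic ℝ X :=
  mem_rowStochastic_iff_isDist.2 fun x => (hπ x).bind (hK x)

theorem stmt_18_general [Nonempty X] (hK : ∀ x u, IsDist (K x u)) {πb : X → U → ℝ}
    (hπb : ∀ x, IsDist (πb x)) (hirr : MatIrreducible (transitionMatrix K πb))
    (hap : MatAperiodic (transitionMatrix K πb)) {δ : ℝ} (hδ : 0 < δ) :
    ∃ C ρ : ℝ, 0 < C ∧ 0 < ρ ∧ ρ < 1 ∧
      ∀ π : X → U → ℝ, (∀ x, IsDist (π x)) → (∀ x u, δ ≤ π x u) →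
        (∃! μ, IsStationary (transitionMatrix K π) μ) ∧
        ∀ μ, IsStationary (transitionMatrix K π) μ →
          ∀ x t, tv ((transitionMatrix K π ^ t) x) μ ≤ C * ρ ^ t := by
  have hprim : (transitionMatrix K πb).IsPrimitive :=
    isPrimitive_of_matIrreducible_of_matAperiodic
      (transitionMatrix_mem_rowStochastic hK hπb).1 hirr hap
  obtain ⟨C, ρ, hC, hρ0, hρ1, hmix⟩ :=
    exists_uniform_geometric_mixing_of_isPrimitive (isPrimitive_smul hprim hδ)
  refine ⟨C, ρ, hC, hρ0, hρ1, fun π hπ hδπ =>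
    hmix _ (transitionMatrix_mem_rowStochastic hK hπ)
      (smul_transitionMatrix_apply_le (fun x u => (hK x u).1) fun x u => ?_)⟩
  exact (mul_le_of_le_one_right hδ.le ((hπb x).le_one u)).trans (hδπ x u)

end DecisionProcesses

end UniformMixing

/-- uniform geometric mixing over `Π_δ`. If some joint policy `ζ_b` induces
an irreducible and aperiodic chain, then there are `C > 0` and `ρ ∈ (0,1)` such that for
every `ζ ∈ Π_δ`, its (unique) stationary distribution `μ^ζ` satisfies
`TV(P_ζ^t(s,·), μ^ζ) ≤ C ρ^t` for every initial state `s` and every `t ≥ 0`. -/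
theorem stmt_18 {n : ℕ} (G : SimpleGraph (Fin n))
    (S A : Fin n → Type)
    [∀ i, Fintype (S i)] [∀ i, Fintype (A i)]
    [∀ i, DecidableEq (S i)] [∀ i, DecidableEq (A i)]
    [∀ i, Nonempty (S i)] [∀ i, Nonempty (A i)]
    (P : ∀ i : Fin n, (∀ j, S j) → A i → S i → ℝ)
    (hP : IsKernel P) (hPloc : IsLocalKernel G P)
    (ζb : ∀ i : Fin n, (∀ j, S j) → A i → ℝ) (hζb : IsPolicy ζb)
    (hirr : MatIrreducible (Pmat P ζb)) (hap : MatAperiodic (Pmat P ζb))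
    (δ : ℝ) (hδ : 0 < δ) :
    ∃ C ρ : ℝ, 0 < C ∧ 0 < ρ ∧ ρ < 1 ∧
      ∀ ζ : ∀ i : Fin n, (∀ j, S j) → A i → ℝ, IsPolicy ζ →
        (∀ s a, δ ≤ jprob ζ s a) →
        (∃! μ : (∀ j, S j) → ℝ, IsStationary (Pmat P ζ) μ) ∧
        ∀ μ : (∀ j, S j) → ℝ, IsStationary (Pmat P ζ) μ →
          ∀ (s : ∀ j, S j) (t : ℕ),
            tv (fun s' => (Pmat P ζ ^ t) s s') μ ≤ C * ρ ^ t := by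
  obtain ⟨C, ρ, hC, hρ0, hρ1, hmix⟩ := stmt_18_general (K := Pglob P) (πb := jprob ζb)
    (fun s a => .pi fun i => hP i s (a i)) (fun s => .pi fun i => hζb i s) hirr hap hδ
  exact ⟨C, ρ, hC, hρ0, hρ1, fun ζ hζ => hmix (jprob ζ) fun s => .pi fun i => hζ i s⟩

end LPI
end
end

section
/- Let P_1 and P_2 be row-stochastic matrices on a finite state space, each admitting a unique stationary distribution, μ_1 and μ_2 respectively. Suppose there exist C_1 > 0 and ρ_1 ∈ (0,1) such that ‖P_1^t − M_1‖_2 ≤ C_1 ρ_1^t for all t ≥ 0, where M_1 is the matrix all of whose rows equal μ_1 and ‖·‖_2 is the spectral (operator ℓ_2) norm. Then there exists a constant L (depending only on C_1, ρ_1, and the spectral norms of P_1 and P_2) such that ‖μ_1 − μ_2‖_2 ≤ L ‖P_1 − P_2‖_2. -/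
open scoped BigOperators

noncomputable section

/-- Euclidean (ℓ²) norm of a finitely supported vector. -/
def l2norm {ι : Type} [Fintype ι] (v : ι → ℝ) : ℝ :=
  Real.sqrt (∑ i, v i ^ 2)

/-- Spectral norm (operator norm induced by the Euclidean norm) of a matrix. -/
def specNorm {ι : Type} [Fintype ι] (M : Matrix ι ι ℝ) : ℝ :=
  ⨆ v : { v : ι → ℝ // l2norm v ≤ 1 }, l2norm (M.mulVec v.1)

/-- A row-stochastic matrix. -/
def RowStochastic {ι : Type} [Fintype ι] (M : Matrix ι ι ℝ) : Prop :=
  (∀ i j, 0 ≤ M i j) ∧ ∀ i, ∑ j, M i j = 1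

/-- A stationary distribution of `M`: a probability row vector `μ` with `μ M = μ`. -/
def IsStationaryVec {ι : Type} [Fintype ι] (M : Matrix ι ι ℝ) (μ : ι → ℝ) : Prop :=
  (∀ i, 0 ≤ μ i) ∧ (∑ i, μ i = 1) ∧ Matrix.vecMul μ M = μ

/-!
Start the chain `P₁` from the stationary distribution `μ₂` of `P₂`: the laws `μ₂ P₁ ^ t` run from
`μ₂` to `μ₂ M₁ = μ₁`. Passing to the limit in `P₁ ^ (t + 1) = P₁ P₁ ^ t` gives `P₁ M₁ = M₁`, so `M₁`
annihilates `μ₂ - μ₂ P₁ = μ₂ (P₂ - P₁)`, and the increment at time `t` equals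
`μ₂ (P₂ - P₁) (P₁ ^ t - M₁)`, of norm at most `C₁ ρ₁ ^ t ‖P₁ - P₂‖`. Summing the geometric series
bounds `‖μ₁ - μ₂‖` by `C₁ / (1 - ρ₁) * ‖P₁ - P₂‖`.
-/

section GeometricConvergence

open Filter Matrix WithLp
open scoped Topology Matrix.Norms.L2Operator

theorem mul_eq_of_tendsto_pow {M : Type*} [Monoid M] [TopologicalSpace M] [T2Space M]
    [SeparatelyContinuousMul M] {a p : M} (h : Tendsto (a ^ ·) atTop (𝓝 p)) : p * a = p :=
  isFixedPt_of_tendsto_iterate (f := (· * a)) (x := 1) (by simpa [mul_right_iterate] using h)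
    (continuous_mul_const a).continuousAt

theorem tendsto_of_norm_sub_le_geometric {E : Type*} [SeminormedAddCommGroup E] {u : ℕ → E} {a : E}
    {C ρ : ℝ} (hρ₀ : 0 ≤ ρ) (hρ₁ : ρ < 1) (hu : ∀ t, ‖u t - a‖ ≤ C * ρ ^ t) :
    Tendsto u atTop (𝓝 a) := by
  refine tendsto_iff_norm_sub_tendsto_zero.2 (squeeze_zero (fun _ => norm_nonneg _) hu ?_)
  simpa using (tendsto_pow_atTop_nhds_zero_of_lt_one hρ₀ hρ₁).const_mul C

theorem norm_sub_apply_le_of_norm_pow_sub_le {𝕜 E : Type*} [NontriviallyNormedField 𝕜]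
    [NormedAddCommGroup E] [NormedSpace 𝕜 E] {A Q : E →L[𝕜] E} {C ρ : ℝ} (hρ₀ : 0 ≤ ρ)
    (hρ₁ : ρ < 1) (hA : ∀ t : ℕ, ‖A ^ t - Q‖ ≤ C * ρ ^ t) (x : E) :
    ‖x - Q x‖ ≤ C * ‖x - A x‖ / (1 - ρ) := by
  have hlim : Tendsto (A ^ ·) atTop (𝓝 Q) := tendsto_of_norm_sub_le_geometric hρ₀ hρ₁ hA
  have hQA : Q (A x) = Q x := DFunLike.congr_fun (mul_eq_of_tendsto_pow hlim) x
  have horbit : Tendsto (fun t => (A ^ t) x) atTop (𝓝 (Q x)) :=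
    ((ContinuousLinearMap.apply 𝕜 E x).continuous.tendsto Q).comp hlim
  have hstep (t : ℕ) : dist ((A ^ t) x) ((A ^ (t + 1)) x) ≤ C * ‖x - A x‖ * ρ ^ t := calc
    dist ((A ^ t) x) ((A ^ (t + 1)) x) = ‖(A ^ t - Q) (x - A x)‖ := by
      simp [dist_eq_norm, pow_succ, hQA]
    _ ≤ C * ρ ^ t * ‖x - A x‖ := (A ^ t - Q).le_of_opNorm_le (hA t) _
    _ = C * ‖x - A x‖ * ρ ^ t := mul_right_comm ..
  simpa [dist_eq_norm] using dist_le_of_le_geometric_of_tendsto₀ ρ _ hρ₁ hstep horbit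

theorem l2_opNorm_transpose {m n : Type*} [Fintype m] [DecidableEq m] [Fintype n] [DecidableEq n]
    (A : Matrix m n ℝ) : ‖Aᵀ‖ = ‖A‖ := by
  rw [← conjTranspose_eq_transpose_of_trivial, l2_opNorm_conjTranspose]

theorem norm_toLp_vecMul_le {m n : Type*} [Fintype m] [Fintype n] [DecidableEq n] (v : m → ℝ)
    (A : Matrix m n ℝ) : ‖toLp 2 (v ᵥ* A)‖ ≤ ‖A‖ * ‖toLp 2 v‖ := by
  classical
  simpa [mulVec_transpose, l2_opNorm_transpose] using l2_opNorm_mulVec Aᵀ (toLp 2 v)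

theorem vecMul_replicateRow {m n α : Type*} [Fintype m] [NonUnitalNonAssocSemiring α] (v : m → α)
    (w : n → α) : v ᵥ* replicateRow m w = (∑ i, v i) • w := by
  ext j
  simp [vecMul, dotProduct, Finset.sum_mul]

theorem norm_toLp_sub_le_of_norm_pow_sub_replicateRow_le {ι : Type*} [Fintype ι] [DecidableEq ι]
    {P : Matrix ι ι ℝ} {π μ : ι → ℝ} {C ρ : ℝ} (hρ₀ : 0 ≤ ρ) (hρ₁ : ρ < 1)
    (hP : ∀ t : ℕ, ‖P ^ t - replicateRow ι π‖ ≤ C * ρ ^ t)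
    (hμ : ∑ i, μ i = 1) : ‖toLp 2 (μ - π)‖ ≤ C * ‖toLp 2 (μ - μ ᵥ* P)‖ / (1 - ρ) := by
  have hPT (t : ℕ) : ‖toEuclideanCLM (𝕜 := ℝ) Pᵀ ^ t - toEuclideanCLM (𝕜 := ℝ) (replicateRow ι π)ᵀ‖
      ≤ C * ρ ^ t := by
    rw [← map_pow, ← map_sub, l2_opNorm_toEuclideanCLM, ← transpose_pow, ← transpose_sub,
      l2_opNorm_transpose]
    exact hP t
  simpa only [toEuclideanCLM_toLp, mulVec_transpose, vecMul_replicateRow, hμ, one_smul, toLp_sub]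
    using norm_sub_apply_le_of_norm_pow_sub_le hρ₀ hρ₁ hPT (toLp 2 μ)

section SpecNorm

variable {ι : Type} [Fintype ι]

theorem l2norm_eq_norm_toLp (v : ι → ℝ) : l2norm v = ‖toLp 2 v‖ := by
  simp [l2norm, EuclideanSpace.norm_eq]

theorem l2norm_le_sum_of_nonneg {v : ι → ℝ} (hv : ∀ i, 0 ≤ v i) : l2norm v ≤ ∑ i, v i :=
  Real.sqrt_le_iff.2 ⟨Finset.sum_nonneg fun i _ => hv i,
    Finset.sum_sq_le_sq_sum_of_nonneg fun i _ => hv i⟩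

theorem specNorm_eq_l2_opNorm [DecidableEq ι] (M : Matrix ι ι ℝ) : specNorm M = ‖M‖ := by
  refine Eq.trans ?_ (toEuclideanCLM (𝕜 := ℝ) M).sSup_unitClosedBall_eq_norm
  rw [sSup_image']
  refine (WithLp.equiv 2 (ι → ℝ)).symm.subtypeEquiv (fun v => ?_) |>.iSup_congr fun v => ?_ <;>
    simp [l2norm_eq_norm_toLp]

theorem stmt_19_general [DecidableEq ι] {P₁ P₂ : Matrix ι ι ℝ} {μ₁ μ₂ : ι → ℝ} {C₁ ρ₁ : ℝ}
    (hμ₂ : IsStationaryVec P₂ μ₂) (hρ₀ : 0 ≤ ρ₁) (hρ₁ : ρ₁ < 1)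
    (hP₁ : ∀ t : ℕ, specNorm (P₁ ^ t - replicateRow ι μ₁) ≤ C₁ * ρ₁ ^ t) :
    l2norm (μ₁ - μ₂) ≤ C₁ / (1 - ρ₁) * specNorm (P₁ - P₂) := by
  obtain ⟨hnonneg, hsum, hfix⟩ := hμ₂
  have hle : ‖toLp 2 μ₂‖ ≤ 1 := by
    simpa only [l2norm_eq_norm_toLp, hsum] using l2norm_le_sum_of_nonneg hnonneg
  simp only [l2norm_eq_norm_toLp, specNorm_eq_l2_opNorm] at hP₁ ⊢
  have hC₁ : 0 ≤ C₁ := by simpa using (norm_nonneg _).trans (hP₁ 0)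
  have hresidual : ‖toLp 2 (μ₂ - μ₂ ᵥ* P₁)‖ ≤ ‖P₁ - P₂‖ := calc
    ‖toLp 2 (μ₂ - μ₂ ᵥ* P₁)‖ = ‖toLp 2 (μ₂ ᵥ* (P₂ - P₁))‖ := by rw [vecMul_sub, hfix]
    _ ≤ ‖P₂ - P₁‖ * ‖toLp 2 μ₂‖ := norm_toLp_vecMul_le _ _
    _ ≤ ‖P₁ - P₂‖ := by
      rw [norm_sub_rev]
      exact mul_le_of_le_one_right (norm_nonneg _) hle
  calc ‖toLp 2 (μ₁ - μ₂)‖ = ‖toLp 2 (μ₂ - μ₁)‖ := by rw [toLp_sub, norm_sub_rev, toLp_sub]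
    _ ≤ C₁ * ‖toLp 2 (μ₂ - μ₂ ᵥ* P₁)‖ / (1 - ρ₁) :=
      norm_toLp_sub_le_of_norm_pow_sub_replicateRow_le hρ₀ hρ₁ hP₁ hsum
    _ ≤ C₁ * ‖P₁ - P₂‖ / (1 - ρ₁) := by gcongr
    _ = C₁ / (1 - ρ₁) * ‖P₁ - P₂‖ := mul_div_right_comm ..

end SpecNorm

end GeometricConvergence

/-- there is a constant `L`, depending only on `C₁`, `ρ₁` and the spectral
norms of `P₁` and `P₂`, such that for any pair of row-stochastic matrices `P₁, P₂` with
unique stationary distributions `μ₁, μ₂`, if `‖P₁^t − M₁‖₂ ≤ C₁ ρ₁^t` for all `t ≥ 0`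
(where `M₁` has all rows equal to `μ₁`), then `‖μ₁ − μ₂‖₂ ≤ L ‖P₁ − P₂‖₂`. -/
theorem stmt_19 :
    ∃ L : ℝ → ℝ → ℝ → ℝ → ℝ,
      ∀ (ι : Type) [Fintype ι] [DecidableEq ι] [Nonempty ι],
      ∀ (P1 P2 : Matrix ι ι ℝ) (μ1 μ2 : ι → ℝ) (C1 ρ1 : ℝ),
        RowStochastic P1 → RowStochastic P2 →
        IsStationaryVec P1 μ1 → (∀ μ, IsStationaryVec P1 μ → μ = μ1) →
        IsStationaryVec P2 μ2 → (∀ μ, IsStationaryVec P2 μ → μ = μ2) →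
        0 < C1 → 0 < ρ1 → ρ1 < 1 →
        (∀ t : ℕ, specNorm (P1 ^ t - Matrix.of fun _ j => μ1 j) ≤ C1 * ρ1 ^ t) →
        l2norm (μ1 - μ2) ≤ L C1 ρ1 (specNorm P1) (specNorm P2) * specNorm (P1 - P2) := by
  refine ⟨fun C₁ ρ₁ _ _ => C₁ / (1 - ρ₁), ?_⟩
  intro ι _ _ _ P1 P2 μ1 μ2 C1 ρ1 _ _ _ _ hμ2 _ _ hρ0 hρ1 hP1
  exact stmt_19_general hμ2 hρ0.le hρ1 hP1
end
end
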